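/- Let G be the convex polyhedral cone in R^m given as the intersection of half spaces G_i = {x in R^m : <x, n_i> >= 0}, i = 1,...,N, where each n_i is a unit vector, and let F_i = {x in the boundary of G : <x, n_i> = 0}. With each face F_i associate a unit vector d_i with <d_i, n_i> > 0. Suppose that for every x in the boundary of G there exists a unit inward normal n in n(x) such that <d, n> > 0 for all d in d(x). Then there exists a function g : R^m -> R that is twice continuously differentiable, bounded, with bounded first and second derivatives, such that <grad g(x), d_i> >= 1 for every x in F_i and every i in {1,...,N}. -/

import Mathlib

open scoped RealInnerProductSpace

lemma aux_phi : ∃ φ f : ℝ → ℝ, ContDiff ℝ 2 φ ∧ (∀ s, HasDerivAt φ (f s) s) ∧ ContDiff ℝ 1 f ∧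
    (∃ C, ∀ s, |φ s| ≤ C ∧ |f s| ≤ C ∧ |deriv f s| ≤ C) ∧ (∀ s, 0 ≤ f s) ∧ (∀ s, f s ≤ 1) ∧
    (∀ s, 0 ≤ s → s ≤ 1 → f s = 1) ∧ (∀ s, 2 ≤ s → f s = 0) := by
  let b : ContDiffBump (0 : ℝ) := ⟨1, 2, by norm_num, by norm_num⟩
  have hder : ∀ s, HasDerivAt (fun s => ∫ t in (0:ℝ)..s, b t) (b s) s := fun s =>
    intervalIntegral.integral_hasDerivAt_right (b.continuous.intervalIntegrable _ _)
      (b.continuous.stronglyMeasurableAtFilter _ _) b.continuous.continuousAt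
  have hb1 : ContDiff ℝ 1 (b : ℝ → ℝ) := b.contDiff
  have hint : MeasureTheory.Integrable (b : ℝ → ℝ) :=
    b.continuous.integrable_of_hasCompactSupport b.hasCompactSupport
  obtain ⟨C, hC⟩ := b.hasCompactSupport.deriv.exists_bound_of_continuous
    (hb1.continuous_deriv le_rfl)
  refine ⟨fun s => ∫ t in (0:ℝ)..s, b t, b, ?_, hder, hb1, ?_, fun s => b.nonneg,
    fun s => b.le_one, ?_, ?_⟩
  · have : (2 : WithTop ℕ∞) = 1 + 1 := by norm_num
    rw [this, contDiff_succ_iff_deriv]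
    refine ⟨fun s => (hder s).differentiableAt, by simp, ?_⟩
    have : deriv (fun s => ∫ t in (0:ℝ)..s, b t) = b := funext fun s => (hder s).deriv
    rw [this]; exact hb1
  · refine ⟨max (∫ t, ‖b t‖) (max 1 C), fun s => ⟨?_, ?_, ?_⟩⟩
    · refine le_trans ?_ (le_max_left _ _)
      rw [← Real.norm_eq_abs]
      refine intervalIntegral.norm_integral_le_integral_norm_uIoc.trans ?_
      exact MeasureTheory.setIntegral_le_integral hint.norm (Filter.Eventually.of_forall fun _ => norm_nonneg _)
    · rw [abs_of_nonneg b.nonneg]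
      exact b.le_one.trans ((le_max_left _ _).trans (le_max_right _ _))
    · exact (hC s).trans ((le_max_right _ _).trans (le_max_right _ _))
  · intro s h0 h1
    apply b.one_of_mem_closedBall
    simp [b, abs_le]; constructor <;> linarith
  · intro s h2
    apply b.zero_of_le_dist
    simp [b]; exact h2.trans (le_abs_self s)

def AuxGood {E : Type*} [NormedAddCommGroup E] [NormedSpace ℝ E] (g : E → ℝ) : Prop :=
  ContDiff ℝ 2 g ∧
      (∃ C : ℝ, ∀ x, |g x| ≤ C ∧ ‖fderiv ℝ g x‖ ≤ C ∧ ‖fderiv ℝ (fderiv ℝ g) x‖ ≤ C)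

lemma AuxGood.add {E : Type*} [NormedAddCommGroup E] [NormedSpace ℝ E] {g h : E → ℝ}
    (hg : AuxGood g) (hh : AuxGood h) : AuxGood (fun x => g x + h x) := by
  obtain ⟨hg, C, hC⟩ := hg
  obtain ⟨hh, D, hD⟩ := hh
  have e : fderiv ℝ (fun x => g x + h x) = fun x => fderiv ℝ g x + fderiv ℝ h x := by
    funext x
    exact fderiv_fun_add (hg.differentiable (by norm_num) x) (hh.differentiable (by norm_num) x)
  have dg : Differentiable ℝ (fderiv ℝ g) :=
    (hg.fderiv_right (m := 1) (by norm_num)).differentiable (by norm_num)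
  have dh : Differentiable ℝ (fderiv ℝ h) :=
    (hh.fderiv_right (m := 1) (by norm_num)).differentiable (by norm_num)
  refine ⟨hg.add hh, C + D, fun x => ⟨?_, ?_, ?_⟩⟩
  · exact (abs_add_le _ _).trans (add_le_add (hC x).1 (hD x).1)
  · rw [e]; exact (norm_add_le _ _).trans (add_le_add (hC x).2.1 (hD x).2.1)
  · rw [e, fderiv_fun_add (dg x) (dh x)]
    refine (norm_add_le (fderiv ℝ (fderiv ℝ g) x) (fderiv ℝ (fderiv ℝ h) x)).trans ?_
    exact add_le_add (hC x).2.2 (hD x).2.2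

lemma AuxGood.sum {E : Type*} [NormedAddCommGroup E] [NormedSpace ℝ E] {ι : Type*} 
    (s : Finset ι) (g : ι → E → ℝ)
    (hg : ∀ i ∈ s, AuxGood (g i)) : AuxGood (fun x => ∑ i ∈ s, g i x) := by
  classical
  induction s using Finset.induction_on with
  | empty => 
    refine ⟨by simpa using contDiff_const, 0, fun x => ?_⟩
    simp
    exact (norm_zero (E := E →L[ℝ] E →L[ℝ] ℝ)).le
  | insert a s ha ih =>
    simp only [Finset.sum_insert ha]
    exact (hg a (by simp)).add (ih fun i hi => hg i (by simp [hi]))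

lemma auxGood_comp {E : Type*} [NormedAddCommGroup E] [NormedSpace ℝ E] (φ f : ℝ → ℝ)
    (h2 : ContDiff ℝ 2 φ) (hder : ∀ s, HasDerivAt φ (f s) s) (h1 : ContDiff ℝ 1 f)
    (hb : ∃ C, ∀ s, |φ s| ≤ C ∧ |f s| ≤ C ∧ |deriv f s| ≤ C) (A : ℝ) (L : E →L[ℝ] ℝ) :
    AuxGood (fun x => A * φ (L x)) ∧
    ∀ x, HasFDerivAt (fun x => A * φ (L x)) ((A * f (L x)) • L) x := by
  have hd : ∀ x, HasFDerivAt (fun x => A * φ (L x)) ((A * f (L x)) • L) x := by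
    intro x
    have := ((hder (L x)).comp_hasFDerivAt x L.hasFDerivAt).const_mul A
    rw [smul_smul] at this
    exact this
  refine ⟨⟨contDiff_const.mul (h2.comp L.contDiff), ?_⟩, hd⟩
  obtain ⟨C, hC⟩ := hb
  have hC0 : 0 ≤ C := (abs_nonneg _).trans (hC 0).1
  have e : fderiv ℝ (fun x => A * φ (L x)) = fun x => (A * f (L x)) • L := 
    funext fun x => (hd x).fderiv
  have hd2 : ∀ x, HasFDerivAt (fun x => (A * f (L x)) • L)
      (((A * deriv f (L x)) • L).smulRight L) x := by
    intro x
    have := (((h1.differentiable (by norm_num) (L x)).hasDerivAt.comp_hasFDerivAt x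
      L.hasFDerivAt).const_mul A)
    rw [smul_smul] at this
    exact this.smul_const L
  refine ⟨max (|A| * C) (max (|A| * C * ‖L‖) (|A| * C * ‖L‖ * ‖L‖)), fun x => ⟨?_, ?_, ?_⟩⟩
  · refine le_trans ?_ (le_max_left _ _)
    rw [abs_mul]
    exact mul_le_mul_of_nonneg_left (hC _).1 (abs_nonneg _)
  · refine le_trans ?_ ((le_max_left _ _).trans (le_max_right _ _))
    rw [e, norm_smul, Real.norm_eq_abs, abs_mul]
    gcongr
    exact (hC _).2.1
  · refine le_trans ?_ ((le_max_right _ _).trans (le_max_right _ _))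
    rw [e, (hd2 x).fderiv, ContinuousLinearMap.norm_smulRight_apply, norm_smul, Real.norm_eq_abs, 
      abs_mul]
    gcongr
    exact (hC _).2.2

/-- Hoffman type comparison on a polyhedral cone. -/
lemma aux_compare {m N : ℕ} (n : Fin N → EuclideanSpace ℝ (Fin m))
    (u v : EuclideanSpace ℝ (Fin m))
    (hu : ∀ y, (∀ i, 0 ≤ ⟪y, n i⟫) → 0 ≤ ⟪y, u⟫)
    (hv : ∀ y, (∀ i, 0 ≤ ⟪y, n i⟫) → 0 ≤ ⟪y, v⟫)
    (huv : ∀ y, (∀ i, 0 ≤ ⟪y, n i⟫) → ⟪y, u⟫ = 0 → ⟪y, v⟫ = 0) :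
    ∀ (k : ℕ) (K : Finset (Fin N)), Kᶜ.card = k → ∃ C : ℝ, 0 ≤ C ∧
      ∀ y, (∀ i, 0 ≤ ⟪y, n i⟫) → (∀ i ∈ K, ⟪y, n i⟫ = 0) → ⟪y, v⟫ ≤ C * ⟪y, u⟫ := by
  intro k
  induction k with
  | zero =>
    intro K hK
    have hK' : K = Finset.univ := by simpa using hK
    refine ⟨0, le_rfl, fun y hy hyK => ?_⟩
    have h0 := hv (-y) (fun i => by rw [inner_neg_left, hyK i (by simp [hK'])]; simp)
    rw [inner_neg_left] at h0
    linarith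
  | succ k ih =>
    intro K hK
    by_cases hA : ∃ z, (∀ i, 0 ≤ ⟪z, n i⟫) ∧ (∀ i ∈ K, ⟪z, n i⟫ = 0) ∧ ⟪z, u⟫ = 0 ∧
        ∃ j, 0 < ⟪z, n j⟫
    · obtain ⟨z, hz, hzK, hzu, j0, hj0⟩ := hA
      have hzv := huv z hz hzu
      have hall : ∀ j : Fin N, ∃ C : ℝ, 0 ≤ C ∧ (j ∉ K → 
        ∀ y, (∀ i, 0 ≤ ⟪y, n i⟫) → (∀ i ∈ insert j K, ⟪y, n i⟫ = 0) → ⟪y, v⟫ ≤ C * ⟪y, u⟫) := by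
        intro j
        by_cases hj : j ∈ K
        · exact ⟨0, le_rfl, fun h => absurd hj h⟩
        · obtain ⟨C, hC0, hC⟩ := ih (insert j K) (by
            rw [Finset.card_compl, Finset.card_insert_of_notMem hj]
            rw [Finset.card_compl] at hK
            omega)
          exact ⟨C, hC0, fun _ => hC⟩
      choose C hC0 hC using hall
      refine ⟨∑ j, C j, Finset.sum_nonneg fun j _ => hC0 j, fun y hy hyK => ?_⟩
      obtain ⟨j, hjm, hjmin⟩ := Finset.exists_min_image
        (Finset.univ.filter fun j => 0 < ⟪z, n j⟫) (fun j => ⟪y, n j⟫ / ⟪z, n j⟫)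
        ⟨j0, by simp [hj0]⟩
      simp only [Finset.mem_filter, Finset.mem_univ, true_and] at hjm hjmin
      set t := ⟪y, n j⟫ / ⟪z, n j⟫ with ht
      have ht0 : 0 ≤ t := div_nonneg (hy j) (hz j)
      have hjK : j ∉ K := fun h => by rw [hzK j h] at hjm; exact lt_irrefl _ hjm
      have hin : ∀ w, ⟪y - t • z, w⟫ = ⟪y, w⟫ - t * ⟪z, w⟫ := fun w => by
        rw [inner_sub_left, real_inner_smul_left]
      have h1 := hC j hjK (y - t • z) (fun i => by
          rw [hin]
          rcases (hz i).lt_or_eq with h | h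
          · have := hjmin i h
            rw [le_div_iff₀ h] at this
            linarith
          · rw [← h]; simpa using hy i) (fun i hi => by
          rw [hin]
          rcases Finset.mem_insert.1 hi with rfl | hi
          · rw [ht, div_mul_cancel₀ _ hjm.ne']; simp
          · rw [hyK i hi, hzK i hi]; simp)
      rw [hin, hin, hzu, hzv] at h1
      simp only [mul_zero, sub_zero] at h1
      refine h1.trans (mul_le_mul_of_nonneg_right ?_ (hu y hy))
      exact Finset.single_le_sum (fun i _ => hC0 i) (Finset.mem_univ j)
    · push Not at hA
      let L : Submodule ℝ (EuclideanSpace ℝ (Fin m)) :=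
        (Submodule.span ℝ (Set.range n))ᗮ
      have hL : ∀ z, z ∈ L ↔ ∀ i, ⟪z, n i⟫ = 0 := by
        intro z
        constructor
        · intro h i
          exact Submodule.inner_left_of_mem_orthogonal (Submodule.subset_span (Set.mem_range_self i)) h
        · intro h
          rw [Submodule.mem_orthogonal']
          intro w hw
          induction hw using Submodule.span_induction with
          | mem x hx => obtain ⟨i, rfl⟩ := hx; exact h i
          | zero => simp
          | add x y _ _ hx hy => rw [inner_add_right, hx, hy, add_zero]
          | smul a x _ hx => rw [real_inner_smul_right, hx, mul_zero]
      have hvL : ∀ w, (∀ y, (∀ i, 0 ≤ ⟪y, n i⟫) → 0 ≤ ⟪y, w⟫) → ∀ z ∈ L, ⟪z, w⟫ = 0 := by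
        intro w hw z hz
        rw [hL] at hz
        have a := hw z (fun i => (hz i).ge)
        have b := hw (-z) (fun i => by rw [inner_neg_left, hz i]; simp)
        rw [inner_neg_left] at b
        linarith
      let S : Set (EuclideanSpace ℝ (Fin m)) := Metric.sphere 0 1 ∩
        ((Lᗮ : Set _) ∩ ((⋂ i, {y | 0 ≤ ⟪y, n i⟫}) ∩ (⋂ i ∈ K, {y | ⟪y, n i⟫ = 0})))
      have hSc : IsCompact S := by
        refine (isCompact_sphere _ _).inter_right ?_
        refine (Submodule.isClosed_orthogonal L).inter (IsClosed.inter ?_ ?_)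
        · exact isClosed_iInter fun i => isClosed_le continuous_const (by fun_prop)
        · exact isClosed_biInter fun i _ => isClosed_eq (by fun_prop) continuous_const
      have hSm : ∀ y, y ∈ S ↔ ‖y‖ = 1 ∧ y ∈ Lᗮ ∧ (∀ i, 0 ≤ ⟪y, n i⟫) ∧ ∀ i ∈ K, ⟪y, n i⟫ = 0 := by
        intro y; simp [S]
      have hc : ∃ c : ℝ, 0 < c ∧ ∀ y ∈ S, c ≤ ⟪y, u⟫ := by
        rcases S.eq_empty_or_nonempty with h | h
        · exact ⟨1, one_pos, by simp [h]⟩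
        · obtain ⟨y0, hy0, hmin⟩ := hSc.exists_isMinOn h
            (f := fun y => ⟪y, u⟫) (by fun_prop)
          refine ⟨⟪y0, u⟫, ?_, fun y hy => hmin hy⟩
          obtain ⟨h1, h2, h3, h4⟩ := (hSm y0).1 hy0
          refine lt_of_le_of_ne (hu y0 h3) fun h0 => ?_
          have h5 := hA y0 h3 h4 h0.symm
          have h6 : y0 ∈ L := (hL y0).2 fun i => le_antisymm (h5 i) (h3 i)
          have h7 : ⟪y0, y0⟫ = 0 := Submodule.inner_right_of_mem_orthogonal h6 h2
          rw [real_inner_self_eq_norm_sq, h1] at h7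
          norm_num at h7
      obtain ⟨c, hc0, hc⟩ := hc
      refine ⟨‖v‖ / c, by positivity, fun y hy hyK => ?_⟩
      obtain ⟨p, hp, q, hq, rfl⟩ := Submodule.exists_add_mem_mem_orthogonal (K := L) y
      have hpn := (hL p).1 hp
      simp only [inner_add_left, hpn, zero_add] at hy hyK
      simp only [inner_add_left, hvL u hu p hp, hvL v hv p hp, zero_add]
      by_cases hq0 : q = 0
      · simp [hq0]
      have hqn : 0 < ‖q‖ := norm_pos_iff.2 hq0
      have h1 := hc (‖q‖⁻¹ • q) ((hSm _).2 ⟨by rw [norm_smul, norm_inv, norm_norm, inv_mul_cancel₀ hqn.ne'],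
        Submodule.smul_mem _ _ hq, fun i => by
          rw [real_inner_smul_left]; exact mul_nonneg (by positivity) (hy i), fun i hi => by
          rw [real_inner_smul_left, hyK i hi, mul_zero]⟩)
      rw [real_inner_smul_left, inv_mul_eq_div, le_div_iff₀ hqn] at h1
      have h2 := real_inner_le_norm q v
      rw [div_mul_eq_mul_div, le_div_iff₀ hc0]
      nlinarith [norm_nonneg v]

lemma aux_r {m N : ℕ} (n d : Fin N → EuclideanSpace ℝ (Fin m))
    (hS : ∀ x, (∀ i, 0 ≤ ⟪x, n i⟫) → (∃ i, ⟪x, n i⟫ = 0) → ∃ r : EuclideanSpace ℝ (Fin m),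
      (∀ y, (∀ i, 0 ≤ ⟪y, n i⟫) → 0 ≤ ⟪y, r⟫) ∧ ⟪x, r⟫ = 0 ∧
      ∀ i, ⟪x, n i⟫ = 0 → 0 < ⟪d i, r⟫)
    (I : Finset (Fin N)) (hI : I.Nonempty)
    (hcl : ∀ j, j ∉ I → ∃ y, (∀ i, 0 ≤ ⟪y, n i⟫) ∧ (∀ i ∈ I, ⟪y, n i⟫ = 0) ∧ 0 < ⟪y, n j⟫) :
    ∃ r : EuclideanSpace ℝ (Fin m), (∀ y, (∀ i, 0 ≤ ⟪y, n i⟫) → 0 ≤ ⟪y, r⟫) ∧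
      (∀ y, (∀ i, 0 ≤ ⟪y, n i⟫) → (⟪y, r⟫ = 0 ↔ ∀ i ∈ I, ⟪y, n i⟫ = 0)) ∧
      ∀ i ∈ I, 1 ≤ ⟪d i, r⟫ := by
  have hz : ∀ j, ∃ y, (∀ i, 0 ≤ ⟪y, n i⟫) ∧ (∀ i ∈ I, ⟪y, n i⟫ = 0) ∧ (j ∉ I → 0 < ⟪y, n j⟫) := by
    intro j
    by_cases hj : j ∈ I
    · exact ⟨0, by simp, by simp, fun h => absurd hj h⟩
    · obtain ⟨y, h1, h2, h3⟩ := hcl j hj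
      exact ⟨y, h1, h2, fun _ => h3⟩
  choose z hz1 hz2 hz3 using hz
  set x := ∑ j, z j with hx
  have hxi : ∀ w, ⟪x, w⟫ = ∑ j, ⟪z j, w⟫ := fun w => by rw [hx, sum_inner]
  have hx1 : ∀ i, 0 ≤ ⟪x, n i⟫ := fun i => by
    rw [hxi]; exact Finset.sum_nonneg fun j _ => hz1 j i
  have hx2 : ∀ i ∈ I, ⟪x, n i⟫ = 0 := fun i hi => by
    rw [hxi]; exact Finset.sum_eq_zero fun j _ => hz2 j i hi
  have hx3 : ∀ i, i ∉ I → 0 < ⟪x, n i⟫ := fun i hi => by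
    rw [hxi]
    exact lt_of_lt_of_le (hz3 i hi) (Finset.single_le_sum (f := fun j => ⟪z j, n i⟫)
      (fun j _ => hz1 j i) (Finset.mem_univ i))
  obtain ⟨i0, hi0⟩ := hI
  obtain ⟨r, hr1, hr2, hr3⟩ := hS x hx1 ⟨i0, hx2 i0 hi0⟩
  have hr4 : ∀ y, (∀ i, 0 ≤ ⟪y, n i⟫) → (∀ i ∈ I, ⟪y, n i⟫ = 0) → ⟪y, r⟫ = 0 := by
    intro y hy hyI
    set M := ∑ j, ⟪y, n j⟫ / ⟪x, n j⟫ with hM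
    have h := hr1 (M • x - y) (fun j => by
      rw [inner_sub_left, real_inner_smul_left]
      by_cases hj : j ∈ I
      · rw [hx2 j hj, hyI j hj]; simp
      · have h1 : ⟪y, n j⟫ / ⟪x, n j⟫ ≤ M :=
          Finset.single_le_sum (f := fun j => ⟪y, n j⟫ / ⟪x, n j⟫)
            (fun j _ => div_nonneg (hy j) (hx1 j)) (Finset.mem_univ j)
        rw [div_le_iff₀ (hx3 j hj)] at h1
        linarith)
    rw [inner_sub_left, real_inner_smul_left, hr2] at h
    have := hr1 y hy
    linarith
  set s := ∑ k ∈ I, n k with hs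
  have hsi : ∀ y, ⟪y, s⟫ = ∑ k ∈ I, ⟪y, n k⟫ := fun y => by rw [hs, inner_sum]
  set M := ∑ i ∈ I, (1 + |⟪d i, s⟫|) / ⟪d i, r⟫ with hM
  have hMt : ∀ i ∈ I, 0 ≤ (1 + |⟪d i, s⟫|) / ⟪d i, r⟫ := fun i hi =>
    div_nonneg (by positivity) (hr3 i (hx2 i hi)).le
  have hM0 : 0 ≤ M := Finset.sum_nonneg hMt
  have hin : ∀ y, ⟪y, M • r + s⟫ = M * ⟪y, r⟫ + ∑ k ∈ I, ⟪y, n k⟫ := fun y => by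
    rw [inner_add_right, real_inner_smul_right, hsi]
  refine ⟨M • r + s, fun y hy => ?_, fun y hy => ⟨fun h => ?_, fun h => ?_⟩, fun i hi => ?_⟩
  · rw [hin]
    exact add_nonneg (mul_nonneg hM0 (hr1 y hy)) (Finset.sum_nonneg fun k _ => hy k)
  · rw [hin] at h
    have h1 := mul_nonneg hM0 (hr1 y hy)
    have h2 : 0 ≤ ∑ k ∈ I, ⟪y, n k⟫ := Finset.sum_nonneg fun k _ => hy k
    have h3 : ∑ k ∈ I, ⟪y, n k⟫ = 0 := by linarith
    exact (Finset.sum_eq_zero_iff_of_nonneg fun k _ => hy k).1 h3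
  · rw [hin, hr4 y hy h, Finset.sum_eq_zero h]; simp
  · rw [inner_add_right, real_inner_smul_right]
    have h1 : (1 + |⟪d i, s⟫|) / ⟪d i, r⟫ ≤ M := Finset.single_le_sum hMt hi
    rw [div_le_iff₀ (hr3 i (hx2 i hi))] at h1
    have := neg_abs_le ⟪d i, s⟫
    linarith

theorem exists_C2_function_of_completelyS
    (m N : ℕ) (hN : 1 ≤ N)
    (n d : Fin N → EuclideanSpace ℝ (Fin m))
    (hn : ∀ i, ‖n i‖ = 1) (hd : ∀ i, ‖d i‖ = 1)
    (hdn : ∀ i, 0 < ⟪d i, n i⟫)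
    (G : Set (EuclideanSpace ℝ (Fin m)))
    (hG : G = ⋂ i, {x | 0 ≤ ⟪x, n i⟫})
    (F : Fin N → Set (EuclideanSpace ℝ (Fin m)))
    (hF : ∀ i, F i = {x ∈ frontier G | ⟪x, n i⟫ = 0})
    (hS : ∀ x ∈ frontier G, ∃ r : EuclideanSpace ℝ (Fin m), ‖r‖ = 1 ∧
      (∀ y ∈ G, ⟪r, x - y⟫ ≤ 0) ∧
      (∀ v : EuclideanSpace ℝ (Fin m),
        (∃ α : Fin N → ℝ, (∀ i, 0 ≤ α i) ∧ (∀ i, ⟪x, n i⟫ ≠ 0 → α i = 0) ∧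
          v = ∑ i, α i • d i) → ‖v‖ = 1 → 0 < ⟪v, r⟫)) :
    ∃ g : EuclideanSpace ℝ (Fin m) → ℝ, ContDiff ℝ 2 g ∧
      (∃ C : ℝ, ∀ x, |g x| ≤ C ∧ ‖fderiv ℝ g x‖ ≤ C ∧ ‖fderiv ℝ (fderiv ℝ g) x‖ ≤ C) ∧
      (∀ i : Fin N, ∀ x ∈ F i, 1 ≤ ⟪gradient g x, d i⟫) := by
  classical
  have hGm : ∀ x, x ∈ G ↔ ∀ i, 0 ≤ ⟪x, n i⟫ := by intro x; rw [hG]; simp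
  have hGc : IsClosed G := by
    rw [hG]; exact isClosed_iInter fun i => isClosed_le continuous_const (by fun_prop)
  have hfr : ∀ x, (∀ i, 0 ≤ ⟪x, n i⟫) → (∃ i, ⟪x, n i⟫ = 0) → x ∈ frontier G := by
    rintro x hx ⟨i, hi⟩
    refine ⟨subset_closure ((hGm x).2 hx), fun hint => ?_⟩
    rw [mem_interior_iff_mem_nhds] at hint
    have hc : Filter.Tendsto (fun t : ℝ => x - t • n i) (nhds 0) (nhds x) := by
      have : Continuous (fun t : ℝ => x - t • n i) := by fun_prop
      simpa using this.tendsto 0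
    have h1 : ∀ᶠ t : ℝ in nhdsWithin 0 (Set.Ioi 0), x - t • n i ∈ G :=
      (hc.eventually hint).filter_mono nhdsWithin_le_nhds
    obtain ⟨t, ht, ht0⟩ := (h1.and self_mem_nhdsWithin).exists
    have h2 := (hGm _).1 ht i
    rw [inner_sub_left, real_inner_smul_left, hi, real_inner_self_eq_norm_sq, hn i] at h2
    have : 0 < t := ht0
    linarith
  have hS' : ∀ x, (∀ i, 0 ≤ ⟪x, n i⟫) → (∃ i, ⟪x, n i⟫ = 0) →
      ∃ r : EuclideanSpace ℝ (Fin m),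
      (∀ y, (∀ i, 0 ≤ ⟪y, n i⟫) → 0 ≤ ⟪y, r⟫) ∧ ⟪x, r⟫ = 0 ∧
      ∀ i, ⟪x, n i⟫ = 0 → 0 < ⟪d i, r⟫ := by
    intro x hx hxi
    obtain ⟨r, -, hr1, hr2⟩ := hS x (hfr x hx hxi)
    have h0 := hr1 0 ((hGm _).2 (by simp))
    have h2 := hr1 ((2:ℝ) • x) ((hGm _).2 fun i => by
      rw [real_inner_smul_left]; exact mul_nonneg (by norm_num) (hx i))
    rw [inner_sub_right, real_inner_smul_right] at h2
    rw [sub_zero] at h0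
    have h3 : ⟪r, x⟫ = 0 := by linarith
    refine ⟨r, fun y hy => ?_, by rw [real_inner_comm]; exact h3, fun i hi => ?_⟩
    · have h := hr1 y ((hGm _).2 hy)
      rw [inner_sub_right, h3] at h
      rw [real_inner_comm]; linarith
    · refine hr2 (d i) ⟨Pi.single i 1, fun j => ?_, fun j hj => ?_, ?_⟩ (hd i)
      · by_cases h : j = i
        · subst h; simp
        · simp [h]
      · have h : j ≠ i := by rintro rfl; exact hj hi
        simp [h]
      · simp [Pi.single_apply, ite_smul]
  obtain ⟨φ, f, hφ2, hφd, hf1, hb, hf0, hfle, hfone, hfzero⟩ := aux_phi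
  let cl : Finset (Fin N) → Finset (Fin N) := fun I => Finset.univ.filter fun j =>
    ∀ y, (∀ i, 0 ≤ ⟪y, n i⟫) → (∀ i ∈ I, ⟪y, n i⟫ = 0) → ⟪y, n j⟫ = 0
  have hclm : ∀ I j, j ∈ cl I ↔
      ∀ y, (∀ i, 0 ≤ ⟪y, n i⟫) → (∀ i ∈ I, ⟪y, n i⟫ = 0) → ⟪y, n j⟫ = 0 := by
    intro I j; simp [cl]
  have hsub : ∀ I, I ⊆ cl I := fun I j hj => (hclm I j).2 fun y _ h => h j hj
  have hidem : ∀ I, cl (cl I) = cl I := by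
    intro I
    refine Finset.Subset.antisymm (fun j hj => ?_) (hsub _)
    rw [hclm] at hj ⊢
    exact fun y hy h => hj y hy fun i hi => (hclm I i).1 hi y hy h
  let T : Finset (Finset (Fin N)) := Finset.univ.filter fun I => I.Nonempty ∧ cl I = I
  have hT : ∀ I, I ∈ T ↔ I.Nonempty ∧ cl I = I := by intro I; simp [T]
  have hclT : ∀ I, I.Nonempty → cl I ∈ T := fun I hI => (hT _).2 ⟨hI.mono (hsub I), hidem I⟩
  have hr : ∀ I : Finset (Fin N), ∃ r : EuclideanSpace ℝ (Fin m), I ∈ T →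
      (∀ y, (∀ i, 0 ≤ ⟪y, n i⟫) → 0 ≤ ⟪y, r⟫) ∧
      (∀ y, (∀ i, 0 ≤ ⟪y, n i⟫) → (⟪y, r⟫ = 0 ↔ ∀ i ∈ I, ⟪y, n i⟫ = 0)) ∧
      ∀ i ∈ I, 1 ≤ ⟪d i, r⟫ := by
    intro I
    by_cases hI : I ∈ T
    · obtain ⟨h1, h2⟩ := (hT I).1 hI
      obtain ⟨r, hr⟩ := aux_r n d hS' I h1 (fun j hj => by
        rw [← h2, hclm] at hj
        push Not at hj
        obtain ⟨y, hy1, hy2, hy3⟩ := hj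
        exact ⟨y, hy1, hy2, lt_of_le_of_ne (hy1 j) hy3.symm⟩)
      exact ⟨r, fun _ => hr⟩
    · exact ⟨0, fun h => absurd h hI⟩
  choose r hr using hr
  have hCex : ∀ (I : Finset (Fin N)) (i : Fin N), ∃ C : ℝ, 0 ≤ C ∧ (I ∈ T →
      ∀ y, (∀ i, 0 ≤ ⟪y, n i⟫) → ⟪y, n i⟫ = 0 → ⟪y, r (cl (insert i I))⟫ ≤ C * ⟪y, r I⟫) := by
    intro I i
    by_cases hI : I ∈ T
    · have hJ := hclT (insert i I) (Finset.insert_nonempty i I)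
      obtain ⟨hI1, hI2, -⟩ := hr I hI
      obtain ⟨hJ1, hJ2, -⟩ := hr _ hJ
      obtain ⟨C, hC0, hC⟩ := aux_compare n (r I + n i) (r (cl (insert i I)))
        (fun y hy => by rw [inner_add_right]; exact add_nonneg (hI1 y hy) (hy i)) hJ1
        (fun y hy h => by
          rw [inner_add_right] at h
          have a := hI1 y hy
          have b := hy i
          have ha : ⟪y, r I⟫ = 0 := by linarith
          have hb : ⟪y, n i⟫ = 0 := by linarith
          rw [hI2 y hy] at ha
          rw [hJ2 y hy]
          intro j hj
          refine (hclm _ j).1 hj y hy fun k hk => ?_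
          rcases Finset.mem_insert.1 hk with rfl | hk
          · exact hb
          · exact ha k hk) _ ∅ rfl
      refine ⟨C, hC0, fun _ y hy hyi => ?_⟩
      have := hC y hy (by simp)
      rwa [inner_add_right, hyi, add_zero] at this
    · exact ⟨0, le_rfl, fun h => absurd h hI⟩
  choose C0 hC0 hC using hCex
  obtain ⟨C, hC1, hCle⟩ : ∃ C : ℝ, 1 ≤ C ∧ ∀ I i, C0 I i ≤ C := by
    refine ⟨1 + ∑ I, ∑ i, C0 I i, ?_, fun I i => ?_⟩
    · have : 0 ≤ ∑ I, ∑ i, C0 I i :=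
        Finset.sum_nonneg fun I _ => Finset.sum_nonneg fun i _ => hC0 I i
      linarith
    · have h1 : C0 I i ≤ ∑ i, C0 I i :=
        Finset.single_le_sum (fun i _ => hC0 I i) (Finset.mem_univ i)
      have h2 : ∑ i, C0 I i ≤ ∑ I, ∑ i, C0 I i :=
        Finset.single_le_sum (f := fun I => ∑ i, C0 I i)
          (fun I _ => Finset.sum_nonneg fun i _ => hC0 I i) (Finset.mem_univ I)
      linarith
  obtain ⟨B, hB0, hB⟩ : ∃ B : ℝ, 0 ≤ B ∧ ∀ I i, |⟪d i, r I⟫| ≤ B := by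
    refine ⟨∑ I, ∑ i, |⟪d i, r I⟫|, by positivity, fun I i => ?_⟩
    have h1 : |⟪d i, r I⟫| ≤ ∑ i, |⟪d i, r I⟫| :=
      Finset.single_le_sum (f := fun i => |⟪d i, r I⟫|) (fun i _ => abs_nonneg _)
        (Finset.mem_univ i)
    have h2 : ∑ i, |⟪d i, r I⟫| ≤ ∑ I, ∑ i, |⟪d i, r I⟫| :=
      Finset.single_le_sum (f := fun I => ∑ i, |⟪d i, r I⟫|)
        (fun I _ => by positivity) (Finset.mem_univ I)
    linarith
  set D := 2 * C with hD
  have hD1 : 1 ≤ D := by linarith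
  set Q : ℝ := (T.card : ℝ) with hQ
  have hQ0 : 0 ≤ Q := by positivity
  set lam := 1 + Q * B with hlam
  have hlam1 : 1 ≤ lam := by have := mul_nonneg hQ0 hB0; linarith
  let L : Finset (Fin N) → EuclideanSpace ℝ (Fin m) →L[ℝ] ℝ := fun I =>
    (D ^ I.card)⁻¹ • innerSL ℝ (r I)
  have hL : ∀ I x, L I x = ⟪x, r I⟫ / D ^ I.card := by
    intro I x
    simp [L, real_inner_comm, div_eq_inv_mul]
  have hgood := fun I : Finset (Fin N) =>
    auxGood_comp φ f hφ2 hφd hf1 hb (lam ^ I.card * D ^ I.card) (L I)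
  obtain ⟨hg2, hgb⟩ := AuxGood.sum T _ fun I _ => (hgood I).1
  refine ⟨_, hg2, hgb, fun i x hx => ?_⟩
  have hfd := HasFDerivAt.fun_sum (u := T) fun I _ => (hgood I).2 x
  rw [gradient, InnerProductSpace.toDual_symm_apply, hfd.fderiv]
  have hDp : ∀ k : ℕ, 0 < D ^ k := fun k => pow_pos (by linarith) k
  have hval : (∑ I ∈ T, ((lam ^ I.card * D ^ I.card) * f (L I x)) • L I) (d i) =
      ∑ I ∈ T, lam ^ I.card * f (L I x) * ⟪d i, r I⟫ := by
    rw [ContinuousLinearMap.sum_apply]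
    refine Finset.sum_congr rfl fun I _ => ?_
    rw [ContinuousLinearMap.smul_apply, hL I (d i), smul_eq_mul]
    have := (hDp I.card).ne'
    field_simp
  rw [hval]
  rw [hF i] at hx
  obtain ⟨hxf, hxi⟩ := hx
  have hx : ∀ i, 0 ≤ ⟪x, n i⟫ := (hGm x).1 (hGc.frontier_subset hxf)
  -- the maximal fully active set containing `i`
  have hne : (T.filter fun I => i ∈ I ∧ f (L I x) = 1).Nonempty := by
    refine ⟨cl {i}, Finset.mem_filter.2 ⟨hclT _ (by simp), hsub _ (by simp), ?_⟩⟩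
    have : ⟪x, r (cl {i})⟫ = 0 := by
      rw [(hr _ (hclT {i} (by simp))).2.1 x hx]
      intro j hj
      exact (hclm _ j).1 hj x hx (by simpa using hxi)
    rw [hL, this, zero_div]
    exact hfone 0 le_rfl zero_le_one
  obtain ⟨J, hJ, hJmax⟩ := Finset.exists_max_image _ Finset.card hne
  obtain ⟨hJT, hiJ, hfJ⟩ := Finset.mem_filter.1 hJ
  obtain ⟨k, hk⟩ : ∃ k, J.card = k + 1 := ⟨J.card - 1, by
    have := Finset.card_pos.2 ⟨i, hiJ⟩
    omega⟩
  have hlp : ∀ k : ℕ, 0 < lam ^ k := fun k => pow_pos (by linarith) k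
  have hterm : ∀ I ∈ T, (if I = J then lam ^ (k+1) else 0) - lam ^ k * B ≤
      lam ^ I.card * f (L I x) * ⟪d i, r I⟫ := by
    intro I hI
    have hkB : 0 ≤ lam ^ k * B := mul_nonneg (hlp k).le hB0
    split_ifs with hIJ
    · subst hIJ
      rw [hfJ, hk, mul_one]
      have h1 := (hr I hI).2.2 i hiJ
      have := hlp (k+1)
      nlinarith
    · by_cases hiI : i ∈ I
      · have h1 := (hr I hI).2.2 i hiI
        have : 0 ≤ lam ^ I.card * f (L I x) * ⟪d i, r I⟫ :=
          mul_nonneg (mul_nonneg (hlp _).le (hf0 _)) (by linarith)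
        linarith
      · by_cases hs : 2 ≤ L I x
        · rw [hfzero _ hs]; linarith
        · push Not at hs
          have hI' := hclT (insert i I) (Finset.insert_nonempty i I)
          have hcard : I.card + 1 ≤ (cl (insert i I)).card := by
            rw [← Finset.card_insert_of_notMem hiI]
            exact Finset.card_le_card (hsub _)
          have hmem : cl (insert i I) ∈ T.filter fun I => i ∈ I ∧ f (L I x) = 1 := by
            refine Finset.mem_filter.2 ⟨hI', hsub _ (Finset.mem_insert_self _ _), ?_⟩
            apply hfone
            · rw [hL]; exact div_nonneg ((hr _ hI').1 x hx) (hDp _).le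
            · rw [hL, div_le_one (hDp _)]
              rw [hL, div_lt_iff₀ (hDp _)] at hs
              have hu0 := (hr I hI).1 x hx
              calc ⟪x, r (cl (insert i I))⟫ ≤ C0 I i * ⟪x, r I⟫ := hC I i hI x hx hxi
                _ ≤ C * ⟪x, r I⟫ := mul_le_mul_of_nonneg_right (hCle I i) hu0
                _ ≤ C * (2 * D ^ I.card) := mul_le_mul_of_nonneg_left hs.le (by linarith)
                _ = D ^ (I.card + 1) := by rw [pow_succ]; rw [hD]; ring
                _ ≤ _ := pow_le_pow_right₀ hD1 hcard
          have hle := hJmax _ hmem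
          have hle2 : lam ^ I.card ≤ lam ^ k := pow_le_pow_right₀ hlam1 (by omega)
          have h3 := (abs_le.1 (hB I i)).1
          have h4 : lam ^ I.card * f (L I x) ≤ lam ^ k :=
            (mul_le_of_le_one_right (hlp _).le (hfle _)).trans hle2
          have h5 : 0 ≤ lam ^ I.card * f (L I x) := mul_nonneg (hlp _).le (hf0 _)
          have h6 := mul_le_mul_of_nonneg_right h4 hB0
          have h7 := mul_le_mul_of_nonneg_left h3 h5
          linarith
  refine le_trans ?_ (Finset.sum_le_sum hterm)
  rw [Finset.sum_sub_distrib, Finset.sum_ite_eq' T J, if_pos hJT, Finset.sum_const, nsmul_eq_mul,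
    ← hQ]
  have h1 : 1 ≤ lam ^ k := one_le_pow₀ hlam1
  have h2 : lam ^ (k+1) - Q * (lam ^ k * B) = lam ^ k := by
    rw [pow_succ]
    have : lam ^ k * lam = lam ^ k * (1 + Q * B) := by rw [← hlam]
    rw [this]; ring
  rw [h2]; exact h1
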